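/- Let X be a metric space that is δ-hyperbolic (four-point condition) for some δ ≥ 0, let a group G act on X by isometries, and let x = {x_i} be a sequence in X tending to infinity with basepoint x₀ such that for every g ∈ G the sequence {g·x_i} is equivalent to {x_i}. Then the function q_x : G → ℝ defined by q_x(g) = η_x(g·x₀) is a quasicharacter of defect at most 16δ: for all g,h ∈ G, |q_x(gh) − q_x(g) − q_x(h)| ≤ 16δ. Here η_x(a) = limsup_{n→∞} (d(a,x_n) − d(x₀,x_n)). -/

import Mathlib

/-!
Let `φ` be an isometry for which `φ ∘ x` is equivalent to `x`, and let `o` be the basepoint.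
If `(y, z)_o` is large compared with the distances between `a`, `b` and `o`, then
`d(a, b) + d(y, z)` exceeds neither of the other two sums in the four-point condition, so
`d(a, y) - d(b, y)` and `d(a, z) - d(b, z)` differ by at most `2 * δ`. For the points `φ a`, `φ o`
and `y = x m`, `z = φ (x n)` this says that `d(φ a, x m) - d(φ o, x m)` is within `2 * δ` of
`d(a, x n) - d(o, x n)`. Since `m` and `n` are independent, one may pass to the upper limit first
in `n` and then in `m`, which costs nothing more: `η (φ a) - η (φ o)` is within `2 * δ` of `η a`.
-/

open Filter

section Limsup

variable {ι : Type*} {l : Filter ι} [NeBot l] {u v : ι → ℝ}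

lemma limsup_le_limsup_add_const {c : ℝ} (hu : IsBoundedUnder (· ≤ ·) l (|u ·|))
    (hv : IsBoundedUnder (· ≤ ·) l (|v ·|)) (h : ∀ᶠ i in l, u i ≤ v i + c) :
    limsup u l ≤ limsup v l + c := by
  obtain ⟨-, hu_below⟩ := isBoundedUnder_le_abs.1 hu
  obtain ⟨hv_above, hv_below⟩ := isBoundedUnder_le_abs.1 hv
  have hvc : IsBoundedUnder (· ≤ ·) l (fun i ↦ v i + c) :=
    isBoundedUnder_le_add hv_above isBoundedUnder_const
  calc limsup u l ≤ limsup (fun i ↦ v i + c) l :=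
        limsup_le_limsup h hu_below.isCoboundedUnder_le hvc
    _ = limsup v l + c := limsup_add_const l v c hv_above hv_below.isCoboundedUnder_le

lemma abs_limsup_sub_limsup_sub_le {b c : ℝ} (hu : IsBoundedUnder (· ≤ ·) l (|u ·|))
    (hv : IsBoundedUnder (· ≤ ·) l (|v ·|)) (h : ∀ᶠ i in l, |u i - v i - b| ≤ c) :
    |limsup u l - limsup v l - b| ≤ c := by
  have upper : limsup u l ≤ limsup v l + (b + c) :=
    limsup_le_limsup_add_const hu hv <| h.mono fun i hi ↦ by linarith [(abs_le.1 hi).2]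
  have lower : limsup v l ≤ limsup u l + (c - b) :=
    limsup_le_limsup_add_const hv hu <| h.mono fun i hi ↦ by linarith [(abs_le.1 hi).1]
  exact abs_le.2 ⟨by linarith, by linarith⟩

lemma abs_limsup_sub_le {b c : ℝ} (hu : IsBoundedUnder (· ≤ ·) l (|u ·|))
    (h : ∀ᶠ i in l, |u i - b| ≤ c) : |limsup u l - b| ≤ c := by
  simpa only [limsup_const, sub_zero] using
    abs_limsup_sub_limsup_sub_le (v := fun _ ↦ 0) hu isBoundedUnder_const
      (by simpa only [sub_zero] using h)

end Limsup

/-- The four-point form of `δ`-hyperbolicity: of the three sums of distances between opposite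
pairs among four points, the largest exceeds the second largest by at most `2 * δ`. -/
def IsGromovHyperbolic (X : Type*) [PseudoMetricSpace X] (δ : ℝ) : Prop :=
  ∀ p₁ p₂ p₃ p₄ : X, dist p₁ p₄ + dist p₂ p₃ ≤
    max (dist p₁ p₂ + dist p₃ p₄) (dist p₁ p₃ + dist p₂ p₄) + 2 * δ

section Horofunction

variable {X ι : Type*} [PseudoMetricSpace X] {l : Filter ι} {δ : ℝ}

/-- The Gromov product `(y, z)_o`; the basepoint is the first argument. -/
noncomputable def gromovProduct (o y z : X) : ℝ :=
  (dist y o + dist z o - dist y z) / 2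

/-- Equivalence at infinity of two families of points: `(y i, z j)_o → ∞` as `i` and `j` tend to
infinity independently along `l`. For sequences `l` is `atTop`. -/
def EquivalentAtInfinity (l : Filter ι) (o : X) (y z : ι → X) : Prop :=
  Tendsto (fun p : ι × ι ↦ gromovProduct o (y p.1) (z p.2)) (l ×ˢ l) atTop

/-- The quasi-horofunction `η_x`, normalised at the basepoint `o`, of a family of points `x`
indexed along a filter `l`. -/
noncomputable def quasiHorofunction (l : Filter ι) (o : X) (x : ι → X) (a : X) : ℝ :=
  limsup (fun i ↦ dist a (x i) - dist o (x i)) l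

lemma isBoundedUnder_abs_dist_sub_dist (l : Filter ι) (a b : X) (x : ι → X) :
    IsBoundedUnder (· ≤ ·) l (fun i ↦ |dist a (x i) - dist b (x i)|) :=
  isBoundedUnder_of ⟨dist a b, fun i ↦ abs_dist_sub_le a b (x i)⟩

lemma dist_add_dist_le_of_le_gromovProduct {a b o y z : X}
    (h : (dist a b + dist a o + dist b o) / 2 ≤ gromovProduct o y z) :
    dist a b + dist y z ≤ dist a y + dist b z := by
  have hy : dist y o ≤ dist a y + dist a o := dist_triangle_left y o a
  have hz : dist z o ≤ dist b z + dist b o := dist_triangle_left z o b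
  unfold gromovProduct at h
  linarith

namespace IsGromovHyperbolic

lemma dist_add_dist_le (hX : IsGromovHyperbolic X δ) {a b y z : X}
    (h : dist a b + dist y z ≤ dist a z + dist b y) :
    dist a y + dist b z ≤ dist a z + dist b y + 2 * δ := by
  simpa only [dist_comm z y, max_eq_right h] using hX a b z y

lemma abs_dist_sub_dist_sub_le (hX : IsGromovHyperbolic X δ) {a b o y z : X}
    (h : (dist a b + dist a o + dist b o) / 2 ≤ gromovProduct o y z) :
    |(dist a y - dist b y) - (dist a z - dist b z)| ≤ 2 * δ := by
  have hab : dist a b + dist z y ≤ dist a y + dist b z := by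
    simpa only [dist_comm z y] using dist_add_dist_le_of_le_gromovProduct h
  have hba : dist a b + dist y z ≤ dist a z + dist b y := by
    rw [dist_comm a b, add_comm (dist a z)]
    exact dist_add_dist_le_of_le_gromovProduct (o := o) (by rwa [dist_comm b a, add_right_comm])
  have upper := hX.dist_add_dist_le hba
  have lower := hX.dist_add_dist_le hab
  exact abs_le.2 ⟨by linarith, by linarith⟩

lemma eventually_abs_dist_sub_dist_sub_le (hX : IsGromovHyperbolic X δ) {o : X} {y z : ι → X}
    (hyz : EquivalentAtInfinity l o y z) (a b : X) :
    ∀ᶠ m in l, ∀ᶠ n in l,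
      |(dist a (y m) - dist b (y m)) - (dist a (z n) - dist b (z n))| ≤ 2 * δ :=
  ((hyz.eventually_ge_atTop _).mono fun _ ↦ hX.abs_dist_sub_dist_sub_le).curry

theorem abs_quasiHorofunction_map_sub_sub_le [NeBot l] (hX : IsGromovHyperbolic X δ) {o : X}
    {x : ι → X} {φ : X → X} (hφ : Isometry φ) (hφx : EquivalentAtInfinity l o x (φ ∘ x)) (a : X) :
    |quasiHorofunction l o x (φ a) - quasiHorofunction l o x (φ o) - quasiHorofunction l o x a|
      ≤ 2 * δ := by
  refine abs_limsup_sub_limsup_sub_le (isBoundedUnder_abs_dist_sub_dist l _ _ x)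
    (isBoundedUnder_abs_dist_sub_dist l _ _ x) ?_
  filter_upwards [hX.eventually_abs_dist_sub_dist_sub_le hφx (φ a) (φ o)] with m hm
  have hlim : |quasiHorofunction l o x a - (dist (φ a) (x m) - dist (φ o) (x m))| ≤ 2 * δ :=
    abs_limsup_sub_le (isBoundedUnder_abs_dist_sub_dist l a o x) <| hm.mono fun n hn ↦ by
      simpa only [Function.comp_apply, hφ.dist_eq, abs_sub_comm] using hn
  rwa [sub_sub_sub_cancel_right, abs_sub_comm]

end IsGromovHyperbolic

theorem quasi_horofunction_quasicharacter_general [NeBot l] {G : Type*} [Semigroup G]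
    [SemigroupAction G X] [IsIsometricSMul G X] (hX : IsGromovHyperbolic X δ) (o : X) (x : ι → X)
    (hfix : ∀ g : G, EquivalentAtInfinity l o x (fun i ↦ g • x i)) (g h : G) :
    |quasiHorofunction l o x ((g * h) • o) - quasiHorofunction l o x (g • o) -
      quasiHorofunction l o x (h • o)| ≤ 2 * δ := by
  rw [mul_smul]
  exact hX.abs_quasiHorofunction_map_sub_sub_le (isometry_smul X g) (hfix g) (h • o)

end Horofunction

/-- Let `X` be δ-hyperbolic (four-point condition), let `G` act on `X` by
isometries, and let `{x i}` tend to infinity with `{g (x i)}` equivalent to `{x i}` for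
every `g ∈ G`. Then `q_x(g) = η_x(g (x 0))` is a quasicharacter of defect at most `16δ`. -/
theorem quasi_horofunction_quasicharacter
    (X : Type*) [MetricSpace X]
    (δ : ℝ) (hδ : 0 ≤ δ)
    (hhyp : ∀ p₁ p₂ p₃ p₄ : X,
      dist p₁ p₄ + dist p₂ p₃ ≤
        max (dist p₁ p₂ + dist p₃ p₄) (dist p₁ p₃ + dist p₂ p₄) + 2 * δ)
    (G : Type*) [Group G] (ρ : G →* (X ≃ᵢ X))
    (x : ℕ → X)
    -- `{x i}` tends to infinity
    (hx : Tendsto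
      (fun p : ℕ × ℕ =>
        (dist (x p.1) (x 0) + dist (x p.2) (x 0) - dist (x p.1) (x p.2)) / 2)
      atTop atTop)
    -- every `g ∈ G` fixes the boundary point of `{x i}`: `{g (x i)}` is equivalent to `{x i}`
    (hfix : ∀ g : G, Tendsto
      (fun p : ℕ × ℕ =>
        (dist (x p.1) (x 0) + dist (ρ g (x p.2)) (x 0) - dist (x p.1) (ρ g (x p.2))) / 2)
      atTop atTop) :
    ∀ g h : G,
      |limsup (fun m => dist (ρ (g * h) (x 0)) (x m) - dist (x 0) (x m)) atTop -
        limsup (fun m => dist (ρ g (x 0)) (x m) - dist (x 0) (x m)) atTop -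
        limsup (fun m => dist (ρ h (x 0)) (x m) - dist (x 0) (x m)) atTop| ≤ 16 * δ := by
  intro g h
  let : SemigroupAction G X :=
    { smul g := ρ g
      mul_smul g h a := DFunLike.congr_fun (ρ.map_mul g h) a }
  have : IsIsometricSMul G X := ⟨fun g ↦ (ρ g).isometry⟩
  have hequiv (g : G) : EquivalentAtInfinity atTop (x 0) x (fun i ↦ g • x i) := by
    rw [EquivalentAtInfinity, prod_atTop_atTop_eq]
    exact hfix g
  exact (quasi_horofunction_quasicharacter_general hhyp (x 0) x hequiv g h).trans (by linarith)
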